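/- Let q = 2v with v odd, N' a positive integer, and c ∈ ℤ⁴. Then S_q(c) = Σ*_{a mod q} Σ_{b mod q} e((a(F(b) − 4N') + b·c)/q) equals 4 δ q² S(2N', F(c)/2; q), where δ = 1 if all coordinates c_i are odd and δ = 0 otherwise; in particular S_q(c) = 0 unless all c_i are odd, in which case 4 divides F(c). -/

import Mathlib

open Finset

/-- `e(x) = exp(2πi x)`. -/
noncomputable def e (x : ℝ) : ℂ := Complex.exp (2 * Real.pi * Complex.I * x)

/-- The Kloosterman sum `S(m,n;q) = Σ_{x mod q, (x,q)=1} e((m x + n x̄)/q)`. -/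
noncomputable def kloosterman (m n : ℤ) (q : ℕ) : ℂ :=
  ∑ x ∈ (Finset.range q).filter (fun x => Nat.Coprime x q),
    e (((m * (x : ℤ) + n * ((((x : ZMod q)⁻¹).val : ℤ)) : ℤ) : ℝ) / q)

/-- The quadratic form `F(x) = x₁² + x₂² + x₃² + x₄²`. -/
def F (c : Fin 4 → ℤ) : ℤ := ∑ i, (c i) ^ 2

/-- The exponential sum `S_q(c) = Σ*_{a mod q} Σ_{b mod q, b ∈ (ℤ/q)⁴}
    e((a(F(b) - N) + b·c)/q)`. -/
noncomputable def Sq (q : ℕ) (N : ℤ) (c : Fin 4 → ℤ) : ℂ :=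
  ∑ a ∈ (Finset.range q).filter (fun a => Nat.Coprime a q),
    ∑ b : Fin 4 → Fin q,
      e ((((a : ℤ) * (F (fun i => ((b i : ℕ) : ℤ)) - N) +
            ∑ i, ((b i : ℕ) : ℤ) * c i : ℤ) : ℝ) / q)

theorem e_intCast_div (q : ℕ) [NeZero q] (k : ℤ) :
    e ((k : ℝ) / q) = ZMod.stdAddChar (k : ZMod q) := by
  rw [ZMod.stdAddChar_coe, e]
  congr 1
  push_cast
  ring

theorem sum_filter_coprime_eq_sum_units (q : ℕ) [NeZero q] (g : ZMod q → ℂ) :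
    ∑ a ∈ (Finset.range q).filter (fun a => Nat.Coprime a q), g a =
      ∑ u : (ZMod q)ˣ, g u := by
  symm
  refine Finset.sum_bij (fun u _ => (u : ZMod q).val) ?_ ?_ ?_ ?_
  · intro u _
    simpa [ZMod.val_lt] using ZMod.val_coe_unit_coprime u
  · intro u _ u' _ h
    exact Units.ext (ZMod.val_injective q h)
  · intro a ha
    simp only [Finset.mem_filter, Finset.mem_range] at ha
    refine ⟨ZMod.unitOfCoprime a ha.2, Finset.mem_univ _, ?_⟩
    simp [ZMod.val_natCast, Nat.mod_eq_of_lt ha.1]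
  · intro u _
    simp

/-- The quadratic Gauss sum with a linear term, with respect to an additive character. -/
noncomputable def gaussQuad {R : Type*} [CommRing R] [Fintype R] (ψ : AddChar R ℂ) (a c : R) : ℂ :=
  ∑ b : R, ψ (a * b ^ 2 + c * b)

theorem kloosterman_eq_sum_units (q : ℕ) [NeZero q] (m n : ℤ) :
    kloosterman m n q =
      ∑ u : (ZMod q)ˣ, ZMod.stdAddChar ((m : ZMod q) * (u : ZMod q) + (n : ZMod q) * ((u⁻¹ : (ZMod q)ˣ) : ZMod q)) := by
  simp_rw [← ZMod.inv_coe_unit]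
  rw [kloosterman, ← sum_filter_coprime_eq_sum_units q
    (fun x => ZMod.stdAddChar ((m : ZMod q) * x + (n : ZMod q) * x⁻¹))]
  refine Finset.sum_congr rfl fun x _ => ?_
  rw [e_intCast_div]
  simp

theorem Sq_eq_sum_units (q : ℕ) [NeZero q] (N : ℤ) (c : Fin 4 → ℤ) :
    Sq q N c = ∑ u : (ZMod q)ˣ, ZMod.stdAddChar (-(u * N : ZMod q)) *
      ∏ i, gaussQuad ZMod.stdAddChar (u : ZMod q) (c i : ZMod q) := by
  rw [Sq, ← sum_filter_coprime_eq_sum_units q (fun a => ZMod.stdAddChar (-(a * N : ZMod q)) *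
      ∏ i, gaussQuad ZMod.stdAddChar a (c i : ZMod q))]
  refine Finset.sum_congr rfl fun a _ => ?_
  simp only [gaussQuad]
  rw [Finset.prod_univ_sum, Fintype.piFinset_univ, Finset.mul_sum]
  let φ : Fin q ≃ ZMod q :=
    { toFun := fun j => ((j : ℕ) : ZMod q)
      invFun := fun z => ⟨z.val, ZMod.val_lt z⟩
      left_inv := fun j => by ext; simp [ZMod.val_natCast, Nat.mod_eq_of_lt j.2]
      right_inv := fun z => by simp }
  refine Fintype.sum_equiv (Equiv.piCongrRight fun _ => φ) _ _ fun b => ?_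
  rw [e_intCast_div, Fin.prod_univ_four]
  simp only [← AddChar.map_add_eq_mul]
  congr 1
  simp only [F, Equiv.piCongrRight_apply, Pi.map_apply, φ, Equiv.coe_fn_mk]
  simp only [Fin.sum_univ_four]
  push_cast
  ring

section Ring

variable {R : Type*} [CommRing R] [Fintype R]

theorem sum_sq_add_sq_neg {α β : R} (h : α ^ 2 + β ^ 2 = -1) (φ : R → ℂ) :
    ∑ p : R × R, φ (-(p.1 ^ 2 + p.2 ^ 2)) = ∑ p : R × R, φ (p.1 ^ 2 + p.2 ^ 2) := by
  let σ : R × R ≃ R × R :=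
    { toFun := fun p => (α * p.1 + β * p.2, -β * p.1 + α * p.2)
      invFun := fun p => (-(α * p.1 - β * p.2), -(β * p.1 + α * p.2))
      left_inv := fun p => by
        ext
        · linear_combination (-p.1) * h
        · linear_combination (-p.2) * h
      right_inv := fun p => by
        ext
        · linear_combination (-p.1) * h
        · linear_combination (-p.2) * h }
  refine Fintype.sum_equiv σ _ _ fun p => ?_
  congr 1
  simp only [σ, Equiv.coe_fn_mk]
  linear_combination (-(p.1 ^ 2 + p.2 ^ 2)) * h

theorem gaussQuad_zero_sq (ψ : AddChar R ℂ) (t : R) :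
    gaussQuad ψ t 0 ^ 2 = ∑ p : R × R, ψ (t * (p.1 ^ 2 + p.2 ^ 2)) := by
  rw [gaussQuad, sq, Fintype.sum_mul_sum, Fintype.sum_prod_type]
  refine Finset.sum_congr rfl fun x _ => Finset.sum_congr rfl fun y _ => ?_
  rw [← AddChar.map_add_eq_mul]
  congr 1
  ring

theorem gaussQuad_zero_neg_sq {α β : R} (h : α ^ 2 + β ^ 2 = -1) (ψ : AddChar R ℂ) (t : R) :
    gaussQuad ψ (-t) 0 ^ 2 = gaussQuad ψ t 0 ^ 2 := by
  rw [gaussQuad_zero_sq, gaussQuad_zero_sq, ← sum_sq_add_sq_neg h (fun x => ψ (t * x))]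
  simp only [neg_mul, mul_neg]

theorem gaussQuad_zero_mul_neg [DecidableEq R] {ψ : AddChar R ℂ} (hψ : ψ.IsPrimitive) (t : R) :
    gaussQuad ψ t 0 * gaussQuad ψ (-t) 0 =
      ∑ d : R, if 2 * t * d = 0 then ψ (t * d ^ 2) * Fintype.card R else 0 := by
  rw [gaussQuad, gaussQuad, Fintype.sum_mul_sum, Finset.sum_comm]
  have h1 (y : R) : ∑ x, ψ (t * x ^ 2 + 0 * x) * ψ (-t * y ^ 2 + 0 * y) =
      ∑ d, ψ (t * d ^ 2) * ψ (y * (2 * t * d)) := by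
    rw [← Equiv.sum_comp (Equiv.addRight y)]
    refine Finset.sum_congr rfl fun d _ => ?_
    rw [← AddChar.map_add_eq_mul, ← AddChar.map_add_eq_mul]
    congr 1
    simp only [Equiv.coe_addRight]
    ring
  simp_rw [h1]
  rw [Finset.sum_comm]
  refine Finset.sum_congr rfl fun d _ => ?_
  rw [← Finset.mul_sum, AddChar.sum_mulShift _ hψ]
  split_ifs <;> simp

theorem gaussQuad_eq_zero {ψ : AddChar R ℂ} {w a c : R}
    (hψ : ψ (a * w ^ 2 + c * w) ≠ 1) (h2 : 2 * w = 0) : gaussQuad ψ a c = 0 := by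
  have h : gaussQuad ψ a c = ψ (a * w ^ 2 + c * w) * gaussQuad ψ a c := by
    conv_lhs => rw [gaussQuad, ← Equiv.sum_comp (Equiv.addRight w)]
    rw [gaussQuad, Finset.mul_sum]
    refine Finset.sum_congr rfl fun b _ => ?_
    rw [← AddChar.map_add_eq_mul]
    congr 1
    simp only [Equiv.coe_addRight]
    linear_combination a * b * h2
  have h' : (1 - ψ (a * w ^ 2 + c * w)) * gaussQuad ψ a c = 0 := by linear_combination h
  exact (mul_eq_zero.mp h').resolve_left (sub_ne_zero.mpr (Ne.symm hψ))

theorem gaussQuad_complete_square {ψ : AddChar R ℂ} {w k a a' c : R} (hw2 : 2 * w = 0)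
    (hk : 2 * k = 1 + w) (hww : w ^ 2 = w) (hw : ∀ x, w * x = 0 ∨ w * x = w)
    (haa : a * a' = 1) (ha : w * a = w) (hc : w * c = w) :
    gaussQuad ψ a c = ψ (-((1 + w) * k ^ 2 * a' * c ^ 2)) * gaussQuad ψ ((1 + w) * a) 0 := by
  rw [gaussQuad, gaussQuad, ← Equiv.sum_comp (Equiv.addRight (k * a' * c))
    (fun b => ψ ((1 + w) * a * b ^ 2 + 0 * b)), Finset.mul_sum]
  refine Finset.sum_congr rfl fun b _ => ?_
  rw [← AddChar.map_add_eq_mul]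
  congr 1
  have hb : w * b ^ 2 = w * b := by
    rcases hw b with h | h
    · linear_combination (b - 1) * h
    · linear_combination b * h
  simp only [Equiv.coe_addRight]
  linear_combination (-((1 + w) * k ^ 2 * a' * c ^ 2) - 2 * (1 + w) * k * b * c) * haa -
    (1 + w) * b * c * hk - b * c * hww - (b * c + b) * hw2 - b ^ 2 * ha - b * hc - hb

end Ring

theorem ZMod.exists_sq_add_sq_eq_neg_one {v : ℕ} (hv : Odd v) :
    ∃ α β : ZMod (2 * v), α ^ 2 + β ^ 2 = -1 := by
  obtain ⟨j, rfl⟩ := hv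
  have hcop : IsCoprime (4 * j + 1 : ℤ) ((4 * (2 * j + 1) : ℕ) : ℤ) :=
    ⟨4 * j + 1, -(2 * j), by push_cast; ring⟩
  obtain ⟨p, -, hp, hpm⟩ := Nat.forall_exists_prime_gt_and_zmodEq 0 (by omega) hcop
  have : Fact p.Prime := ⟨hp⟩
  obtain ⟨z, hz⟩ := hpm.symm.dvd
  have hp4 : p % 4 ≠ 3 := by
    push_cast at hz
    have : (p : ℤ) = 4 * (j + (2 * j + 1) * z) + 1 := by linear_combination hz
    omega
  obtain ⟨x, y, hxy⟩ := Nat.Prime.sq_add_sq hp4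
  refine ⟨x, y, ?_⟩
  have h0 : ((2 * (2 * j + 1) : ℕ) : ZMod (2 * (2 * j + 1))) = 0 := ZMod.natCast_self _
  have h1 : (x : ZMod (2 * (2 * j + 1))) ^ 2 + (y : ZMod (2 * (2 * j + 1))) ^ 2 = p := by
    rw [← hxy]; push_cast; rfl
  have h2 := congrArg (Int.cast : ℤ → ZMod (2 * (2 * j + 1))) hz
  push_cast at h0 h2
  linear_combination h1 + h2 + (1 + 2 * (z : ZMod (2 * (2 * j + 1)))) * h0

theorem four_dvd_F {c : Fin 4 → ℤ} (hc : ∀ i, Odd (c i)) : (4 : ℤ) ∣ F c := by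
  choose d hd using hc
  refine ⟨∑ i, (d i ^ 2 + d i) + 1, ?_⟩
  simp only [F, hd, Fin.sum_univ_four]
  ring

theorem gaussQuad_zero_pow_four {R : Type*} [CommRing R] [Fintype R] {ψ : AddChar R ℂ}
    (hψ : ψ.IsPrimitive) {α β : R} (hαβ : α ^ 2 + β ^ 2 = -1) {w k a a' : R} (hw0 : w ≠ 0)
    (hw2 : 2 * w = 0) (hk : 2 * k = 1 + w) (hw : ∀ x, w * x = 0 ∨ w * x = w)
    (haa : a * a' = 1) :
    gaussQuad ψ ((1 + w) * a) 0 ^ 4 = 4 * (Fintype.card R : ℂ) ^ 2 := by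
  classical
  have hmul : gaussQuad ψ ((1 + w) * a) 0 * gaussQuad ψ (-((1 + w) * a)) 0 =
      2 * Fintype.card R := by
    have hiff (d : R) : 2 * ((1 + w) * a) * d = 0 ↔ d = 0 ∨ d = w := by
      constructor
      · intro h
        have h2 : 2 * d = 0 := by
          linear_combination a' * h - 2 * d * haa - a * a' * d * hw2
        rcases hw d with h' | h'
        · left
          linear_combination k * h2 - d * hk - h'
        · right
          linear_combination k * h2 - d * hk - h' - hw2
      · rintro (rfl | rfl)
        · ring
        · linear_combination (1 + d) * a * hw2
    have hsq : (1 + w) * a * w ^ 2 = 0 := by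
      rcases hw w with h | h
      · linear_combination (1 + w) * a * h
      · linear_combination (a + a * w + a) * h + a * hw2
    rw [gaussQuad_zero_mul_neg hψ]
    simp_rw [hiff]
    rw [← Finset.sum_filter, show Finset.univ.filter (fun d : R => d = 0 ∨ d = w) = {0, w} by
      ext; simp, Finset.sum_pair hw0.symm, hsq]
    simp
    ring
  calc _ = gaussQuad ψ ((1 + w) * a) 0 ^ 2 * gaussQuad ψ ((1 + w) * a) 0 ^ 2 := by ring
    _ = (gaussQuad ψ ((1 + w) * a) 0 * gaussQuad ψ (-((1 + w) * a)) 0) ^ 2 := by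
      nth_rewrite 2 [← gaussQuad_zero_neg_sq hαβ]
      ring
    _ = _ := by rw [hmul]; ring

theorem ZMod.natCast_half_mul (v : ℕ) (n : ℤ) :
    (Even n → (v : ZMod (2 * v)) * n = 0) ∧ (Odd n → (v : ZMod (2 * v)) * n = v) := by
  have hw2 : ((2 * v : ℕ) : ZMod (2 * v)) = 0 := ZMod.natCast_self _
  push_cast at hw2
  constructor
  · rintro ⟨m, rfl⟩
    push_cast
    linear_combination (m : ZMod (2 * v)) * hw2
  · rintro ⟨m, rfl⟩
    push_cast
    linear_combination (m : ZMod (2 * v)) * hw2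

theorem stmt_5 (v : ℕ) (hv : Odd v) (hv0 : 0 < v) (N' : ℕ) (hN' : 0 < N')
    (c : Fin 4 → ℤ) :
    Sq (2 * v) (4 * (N' : ℤ)) c =
      4 * (if ∀ i, Odd (c i) then (1 : ℂ) else 0) * ((2 * v : ℕ) : ℂ) ^ 2 *
        kloosterman (2 * (N' : ℤ)) (F c / 2) (2 * v) ∧
    ((∀ i, Odd (c i)) → (4 : ℤ) ∣ F c) := by
  refine ⟨?_, four_dvd_F⟩
  have : NeZero (2 * v) := ⟨by omega⟩
  obtain ⟨α, β, hαβ⟩ := ZMod.exists_sq_add_sq_eq_neg_one hv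
  have hψ := ZMod.isPrimitive_stdAddChar (2 * v)
  have hpar := ZMod.natCast_half_mul v
  have hw2 : ((2 * v : ℕ) : ZMod (2 * v)) = 0 := ZMod.natCast_self _
  have hw0 : (v : ZMod (2 * v)) ≠ 0 := by
    rw [Ne, ZMod.natCast_eq_zero_iff]
    intro h
    have := Nat.le_of_dvd hv0 h
    omega
  have hww : (v : ZMod (2 * v)) ^ 2 = v := by
    have := (hpar v).2 (by exact_mod_cast hv)
    push_cast at this
    rw [sq, this]
  obtain ⟨k, hk⟩ : ∃ k : ZMod (2 * v), 2 * k = 1 + v := by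
    obtain ⟨j, hj⟩ := hv
    have hj' := congrArg (Nat.cast : ℕ → ZMod (2 * v)) hj
    push_cast at hj'
    exact ⟨j + 1, by linear_combination -hj'⟩
  have hw (x : ZMod (2 * v)) : (v : ZMod (2 * v)) * x = 0 ∨ (v : ZMod (2 * v)) * x = v := by
    obtain ⟨n, rfl⟩ := ZMod.intCast_surjective x
    exact (Int.even_or_odd n).imp (hpar n).1 (hpar n).2
  push_cast at hw2
  generalize hwdef : (v : ZMod (2 * v)) = w at *
  have hunit (u : (ZMod (2 * v))ˣ) : w * u = w :=
    (hw u).resolve_left fun h => hw0 ((Units.mul_left_eq_zero u).mp h)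
  rw [Sq_eq_sum_units]
  split_ifs with hc
  · have hF : (F c : ZMod (2 * v)) = ∑ i, (c i : ZMod (2 * v)) ^ 2 := by
      simp [F]
    obtain ⟨m, hm⟩ := four_dvd_F hc
    have hm2 : F c / 2 = 2 * m := by omega
    let s : (ZMod (2 * v))ˣ := ⟨w - 2, w - (1 + w) * k,
      by linear_combination (1 - k) * hww + (1 + w) * hk - hww - k * hw2 + w * hw2,
      by linear_combination (1 - k) * hww + (1 + w) * hk - hww - k * hw2 + w * hw2⟩
    rw [kloosterman_eq_sum_units, hm2, Finset.mul_sum]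
    refine Fintype.sum_equiv (Equiv.mulRight s) _ _ fun u => ?_
    have hprod : ∏ i, gaussQuad ZMod.stdAddChar (u : ZMod (2 * v)) (c i : ZMod (2 * v)) =
        ZMod.stdAddChar (-((1 + w) * k ^ 2 * ((u⁻¹ : (ZMod (2 * v))ˣ) : ZMod (2 * v)) * (F c : ZMod (2 * v)))) *
          (4 * ((2 * v : ℕ) : ℂ) ^ 2) := by
      have h1 (i : Fin 4) := gaussQuad_complete_square (ψ := ZMod.stdAddChar)
        hw2 hk hww hw (Units.mul_inv u) (hunit u) ((hpar (c i)).2 (hc i))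
      simp_rw [h1]
      rw [Finset.prod_mul_distrib, Finset.prod_const, Finset.card_univ, Fintype.card_fin,
        gaussQuad_zero_pow_four hψ hαβ hw0 hw2 hk hw (Units.mul_inv u), ZMod.card,
        Fin.prod_univ_four, hF, Fin.sum_univ_four]
      simp only [← AddChar.map_add_eq_mul]
      congr 2
      ring
    rw [hprod, ← mul_assoc, ← AddChar.map_add_eq_mul, mul_one, mul_comm]
    congr 2
    rw [hm]
    simp only [Equiv.coe_mulRight, mul_inv, Units.val_mul, s, Units.inv_mk]
    push_cast
    linear_combination (-2 * (1 + w) * k * ((u⁻¹ : (ZMod (2 * v))ˣ) : ZMod (2 * v)) * m) * hk -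
      ((1 + w) * k * ((u⁻¹ : (ZMod (2 * v))ˣ) : ZMod (2 * v)) * m + N' * (u : ZMod (2 * v)) +
        m * ((u⁻¹ : (ZMod (2 * v))ˣ) : ZMod (2 * v))) * hw2
  · obtain ⟨i, hi⟩ := not_forall.mp hc
    have hci := (hpar (c i)).1 (Int.not_odd_iff_even.mp hi)
    rw [mul_zero, zero_mul, zero_mul]
    refine Finset.sum_eq_zero fun u _ => ?_
    have hval : (u : ZMod (2 * v)) * w ^ 2 + c i * w = w := by
      linear_combination (u : ZMod (2 * v)) * hww + hunit u + hci
    rw [Finset.prod_eq_zero (Finset.mem_univ i), mul_zero]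
    refine gaussQuad_eq_zero (w := w) ?_ hw2
    rw [hval]
    intro h
    exact hw0 (ZMod.injective_stdAddChar (h.trans (AddChar.map_zero_eq_one _).symm))
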